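/- arXiv:1712.05438 — 3 statements merged into one kernel-verified Lean document; each statement's English description precedes it below -/
import Mathlib

section
/- Let μ be a Borel probability measure on Θ, α > 0, and define the smooth margin ψ_α(μ) = −α log( (1/N) Σ_{j=1}^N exp(−y_j h_μ(x_j)/α) ) for a sample S = {(x_j,y_j)}_{j=1}^N. If ψ_α(μ) > 0, then for every ρ with 0 < ρ < ψ_α(μ), the empirical margin distribution satisfies (1/N) Σ_{j=1}^N 1[y_j h_μ(x_j) ≤ ρ] ≤ ( exp((1 − ψ_α(μ))/α) − 1 ) / ( exp((1 − ρ)/α) − 1 ). -/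
open MeasureTheory

/-- Smooth margin versus empirical margin distribution.
Let `h : Θ → X → [-1,1]` be a class of base classifiers, `μ` a Borel probability measure
on `Θ`, `S = {(x_j, y_j)}_{j=1}^N` a dataset with labels `y_j ∈ {−1,1}`, and for `α > 0`
let `ψ_α(μ) = −α log((1/N) Σ_j exp(−y_j h_μ(x_j)/α))` be the smooth margin, where
`h_μ(x) = E_{θ∼μ}[h(θ,x)]`.  If `ψ_α(μ) > 0`, then for every `0 < ρ < ψ_α(μ)`,
`(1/N) Σ_j 1[y_j h_μ(x_j) ≤ ρ] ≤ (exp((1−ψ_α(μ))/α) − 1)/(exp((1−ρ)/α) − 1)`. -/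
theorem smooth_margin_bound
    {X Θ : Type*} [MeasurableSpace X] [MeasurableSpace Θ]
    (h : Θ → X → ℝ) (hmeas : Measurable (Function.uncurry h))
    (hbdd : ∀ θ x, h θ x ∈ Set.Icc (-1 : ℝ) 1)
    (μ : Measure Θ) [IsProbabilityMeasure μ]
    (N : ℕ) (hN : 0 < N) (S : Fin N → X × ℝ)
    (hy : ∀ j, (S j).2 = 1 ∨ (S j).2 = -1)
    (α : ℝ) (hα : 0 < α)
    (ψ : ℝ)
    (hψdef : ψ = -α * Real.log ((N : ℝ)⁻¹ *
      ∑ j : Fin N, Real.exp (-((S j).2 * ∫ θ, h θ (S j).1 ∂μ) / α)))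
    (hψpos : 0 < ψ)
    (ρ : ℝ) (hρ0 : 0 < ρ) (hρψ : ρ < ψ) :
    (N : ℝ)⁻¹ * ∑ j : Fin N,
        (if (S j).2 * (∫ θ, h θ (S j).1 ∂μ) ≤ ρ then (1 : ℝ) else 0)
      ≤ (Real.exp ((1 - ψ) / α) - 1) / (Real.exp ((1 - ρ) / α) - 1) := by
  have hm : ∀ j, (S j).2 * (∫ θ, h θ (S j).1 ∂μ) ≤ 1 := by
    intro j
    have hb : ‖∫ θ, h θ (S j).1 ∂μ‖ ≤ 1 := by
      have := norm_integral_le_of_norm_le_const (μ := μ) (f := fun θ => h θ (S j).1) (C := 1)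
        (Filter.Eventually.of_forall fun θ => by
          rw [Real.norm_eq_abs]
          exact abs_le.2 ⟨(hbdd θ _).1, (hbdd θ _).2⟩)
      simpa using this
    rw [Real.norm_eq_abs, abs_le] at hb
    rcases hy j with e | e <;> rw [e] <;> linarith [hb.1, hb.2]
  generalize hmd : (fun j => (S j).2 * (∫ θ, h θ (S j).1 ∂μ)) = m at *
  have hmj : ∀ j, (S j).2 * (∫ θ, h θ (S j).1 ∂μ) = m j := fun j => congrFun hmd j
  simp only [hmj] at *
  have hNpos : (0 : ℝ) < N := by exact_mod_cast hN
  haveI : Nonempty (Fin N) := ⟨⟨0, hN⟩⟩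
  have hEpos : 0 < (N : ℝ)⁻¹ * ∑ j : Fin N, Real.exp (-(m j) / α) :=
    mul_pos (inv_pos.2 hNpos)
      (Finset.sum_pos (fun j _ => Real.exp_pos _) Finset.univ_nonempty)
  have hE : Real.exp (-ψ / α) = (N : ℝ)⁻¹ * ∑ j : Fin N, Real.exp (-(m j) / α) := by
    rw [← Real.exp_log hEpos]
    congr 1
    rw [hψdef]
    field_simp
  have hkey : Real.exp ((1 - ψ) / α) - 1
      = (N : ℝ)⁻¹ * ∑ j : Fin N, (Real.exp ((1 - m j) / α) - 1) := by
    have e1 : ∀ t : ℝ, Real.exp ((1 - t) / α) = Real.exp (1 / α) * Real.exp (-t / α) := by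
      intro t
      rw [← Real.exp_add]
      congr 1
      ring
    simp only [e1]
    rw [hE, Finset.sum_sub_distrib, ← Finset.mul_sum]
    simp only [Finset.sum_const, Finset.card_univ, Fintype.card_fin, nsmul_eq_mul, mul_one]
    field_simp
  have hnn : ∀ j, 0 ≤ Real.exp ((1 - m j) / α) - 1 := by
    intro j
    have : 0 ≤ (1 - m j) / α := div_nonneg (by linarith [hm j]) hα.le
    linarith [Real.one_le_exp this]
  have hψ1 : ψ ≤ 1 := by
    have h0 : 0 ≤ Real.exp ((1 - ψ) / α) - 1 := by
      rw [hkey]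
      exact mul_nonneg (inv_pos.2 hNpos).le (Finset.sum_nonneg fun j _ => hnn j)
    have h1 : 0 ≤ (1 - ψ) / α := Real.one_le_exp_iff.1 (by linarith)
    by_contra hc
    exact absurd (div_neg_of_neg_of_pos (by linarith : 1 - ψ < 0) hα) (not_lt.2 h1)
  have hD : 0 < Real.exp ((1 - ρ) / α) - 1 := by
    have : 0 < (1 - ρ) / α := div_pos (by linarith) hα
    linarith [Real.one_lt_exp_iff.2 this]
  rw [le_div_iff₀ hD, hkey, mul_assoc, Finset.sum_mul]
  refine mul_le_mul_of_nonneg_left (Finset.sum_le_sum fun j _ => ?_) (inv_pos.2 hNpos).le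
  split_ifs with hj
  · have : (1 - ρ) / α ≤ (1 - m j) / α := by gcongr
    linarith [Real.exp_le_exp.2 this]
  · simpa using hnn j
end

section
/- Suppose Assumption (Continuity) and Assumption (Smoothness and boundedness) hold. If μ* is a probability measure in the d_F-closure of P₂ that is a local minimum of L_S on P with respect to the metric d_F, then the local optimality condition ‖E_S[s_{μ*}(θ,x,y)]‖_{L²(μ*)} = 0 holds. -/
open MeasureTheory

/-- The infinite ensemble `h_μ(x) = E_{θ∼μ}[h(θ,x)]`. -/
noncomputable def ensemble {d : ℕ} {X : Type*} (h : EuclideanSpace ℝ (Fin d) → X → ℝ)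
    (μ : Measure (EuclideanSpace ℝ (Fin d))) (x : X) : ℝ :=
  ∫ θ, h θ x ∂μ

/-- The stochastic gradient `s_μ(θ,x,y) = −l'(−y h_μ(x)) y ∇_θ h(θ,x)`. -/
noncomputable def smu {d : ℕ} {X : Type*} (l : ℝ → ℝ)
    (h : EuclideanSpace ℝ (Fin d) → X → ℝ) (μ : Measure (EuclideanSpace ℝ (Fin d)))
    (θ : EuclideanSpace ℝ (Fin d)) (x : X) (y : ℝ) : EuclideanSpace ℝ (Fin d) :=
  (-(deriv l (-(y * ensemble h μ x))) * y) • gradient (fun θ' => h θ' x) θ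

/-- `E_S[s_μ(θ,x,y)]`, the average of the stochastic gradients over the dataset `S`. -/
noncomputable def gradS {d : ℕ} {X : Type*} (l : ℝ → ℝ)
    (h : EuclideanSpace ℝ (Fin d) → X → ℝ) (N : ℕ) (S : Fin N → X × ℝ)
    (μ : Measure (EuclideanSpace ℝ (Fin d))) (θ : EuclideanSpace ℝ (Fin d)) :
    EuclideanSpace ℝ (Fin d) :=
  (N : ℝ)⁻¹ • ∑ j : Fin N, smu l h μ θ (S j).1 (S j).2

/-- The empirical risk `L_S(μ) = (1/N) Σ_j l(−y_j h_μ(x_j))`. -/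
noncomputable def LS {d : ℕ} {X : Type*} (l : ℝ → ℝ)
    (h : EuclideanSpace ℝ (Fin d) → X → ℝ) (N : ℕ) (S : Fin N → X × ℝ)
    (μ : Measure (EuclideanSpace ℝ (Fin d))) : ℝ :=
  (N : ℝ)⁻¹ * ∑ j : Fin N, l (-((S j).2 * ensemble h μ (S j).1))

/-- The Hessian `∇²_θ h(θ,x)` as a continuous linear map. -/
noncomputable def hess {d : ℕ} {X : Type*} (h : EuclideanSpace ℝ (Fin d) → X → ℝ)
    (x : X) (θ : EuclideanSpace ℝ (Fin d)) :
    EuclideanSpace ℝ (Fin d) →L[ℝ] EuclideanSpace ℝ (Fin d) :=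
  fderiv ℝ (fun θ' => gradient (fun θ'' => h θ'' x) θ') θ

/-- The class `F_C` of functions on `ℝ^d` bounded by `C` and `C`-Lipschitz. -/
def FC {d : ℕ} (C : ℝ) : Set (EuclideanSpace ℝ (Fin d) → ℝ) :=
  {f | (∀ θ, |f θ| ≤ C) ∧ LipschitzWith (Real.toNNReal C) f}

/-- The integral probability metric `d_F(μ,ν) = sup_{f∈F_C} |∫f dμ − ∫f dν|`. -/
noncomputable def dF {d : ℕ} (C : ℝ) (μ ν : Measure (EuclideanSpace ℝ (Fin d))) : ℝ :=
  ⨆ f : FC (d := d) C, |(∫ θ, f.1 θ ∂μ) - ∫ θ, f.1 θ ∂ν|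

theorem aux_grad_cont {d : ℕ} {X : Type*} (h : EuclideanSpace ℝ (Fin d) → X → ℝ)
    (hC2 : ∀ x : X, ContDiff ℝ 2 (fun θ => h θ x)) (x : X) :
    Continuous (fun θ => gradient (fun θ' => h θ' x) θ) := by
  have h1 : Continuous (fderiv ℝ (fun θ => h θ x)) :=
    (hC2 x).continuous_fderiv (by norm_num)
  unfold gradient
  exact (LinearIsometryEquiv.continuous _).comp h1

theorem aux_ens {d : ℕ} {X : Type*} (C : ℝ)
    (h : EuclideanSpace ℝ (Fin d) → X → ℝ)
    (hC2 : ∀ x : X, ContDiff ℝ 2 (fun θ => h θ x))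
    (x : X) (hF : (fun θ => h θ x) ∈ FC (d := d) C)
    (μ : Measure (EuclideanSpace ℝ (Fin d))) [IsProbabilityMeasure μ]
    (g : EuclideanSpace ℝ (Fin d) → EuclideanSpace ℝ (Fin d)) (hg : Continuous g)
    (M : ℝ) (hM : ∀ θ, ‖g θ‖ ≤ M) :
    Integrable (fun θ => inner ℝ (gradient (fun θ' => h θ' x) θ) (g θ)) μ ∧
    HasDerivAt (fun t : ℝ => ensemble h (μ.map (fun θ => θ + t • g θ)) x)
      (∫ θ, inner ℝ (gradient (fun θ' => h θ' x) θ) (g θ) ∂μ) 0 := by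
  have hc : Continuous (fun θ => h θ x) := (hC2 x).continuous
  have hM0 : 0 ≤ M := (norm_nonneg _).trans (hM 0)
  have hgc := aux_grad_cont h hC2 x
  have heq : (fun t : ℝ => ensemble h (μ.map (fun θ => θ + t • g θ)) x)
      = fun t : ℝ => ∫ θ, h (θ + t • g θ) x ∂μ := by
    funext t
    unfold ensemble
    rw [integral_map]
    · exact (by fun_prop : Continuous (fun θ => θ + t • g θ)).aemeasurable
    · exact hc.aestronglyMeasurable
  rw [heq]
  refine hasDerivAt_integral_of_dominated_loc_of_lip (s := Metric.ball 0 1)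
    (F := fun (t : ℝ) θ => h (θ + t • g θ) x)
    (bound := fun _ => (Real.toNNReal C : ℝ) * M)
    (Metric.ball_mem_nhds _ one_pos) ?_ ?_ ?_ ?_ ?_ ?_
  · refine Filter.Eventually.of_forall fun t => ?_
    exact (hc.comp (by fun_prop : Continuous (fun θ => θ + t • g θ))).aestronglyMeasurable
  · refine Integrable.of_bound (C := C) ?_ ?_
    · exact (hc.comp (by fun_prop : Continuous (fun θ => θ + (0:ℝ) • g θ))).aestronglyMeasurable
    · exact Filter.Eventually.of_forall fun θ => hF.1 _
  · exact (hgc.inner hg).aestronglyMeasurable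
  · refine Filter.Eventually.of_forall fun θ => ?_
    apply LipschitzOnWith.of_dist_le_mul
    intro s _ t _
    have h1 := hF.2.dist_le_mul (θ + s • g θ) (θ + t • g θ)
    refine h1.trans ?_
    rw [dist_add_left, dist_eq_norm, ← sub_smul, norm_smul, ← dist_eq_norm]
    rw [Real.coe_nnabs, abs_of_nonneg (by positivity)]
    have := hM θ
    calc (Real.toNNReal C : ℝ) * (dist s t * ‖g θ‖) ≤ (Real.toNNReal C : ℝ) * (dist s t * M) := by
          gcongr
      _ = _ := by ring
  · exact integrable_const _
  · refine Filter.Eventually.of_forall fun θ => ?_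
    have hd : DifferentiableAt ℝ (fun θ => h θ x) (θ + (0:ℝ) • g θ) :=
      ((hC2 x).differentiable (by norm_num)) _
    have h1 := hd.hasFDerivAt
    have h2 : HasDerivAt (fun t : ℝ => θ + t • g θ) ((1:ℝ) • g θ) 0 :=
      ((hasDerivAt_id (0:ℝ)).smul_const (g θ)).const_add θ
    have h3 := h1.comp_hasDerivAt (0:ℝ) h2
    have h4 : inner ℝ (gradient (fun θ' => h θ' x) θ) (g θ)
        = (fderiv ℝ (fun θ => h θ x) (θ + (0:ℝ) • g θ)) ((1:ℝ) • g θ) := by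
      rw [gradient, InnerProductSpace.toDual_symm_apply, zero_smul, add_zero, one_smul]
    rw [h4]
    exact h3

theorem aux_dF {d : ℕ} (C : ℝ) (hC : 0 < C)
    (μ : Measure (EuclideanSpace ℝ (Fin d))) [IsProbabilityMeasure μ]
    (g : EuclideanSpace ℝ (Fin d) → EuclideanSpace ℝ (Fin d)) (hg : Continuous g)
    (M : ℝ) (hM : ∀ θ, ‖g θ‖ ≤ M) (t : ℝ) :
    dF C (μ.map (fun θ => θ + t • g θ)) μ ≤ C * (|t| * M) := by
  have hM0 : 0 ≤ M := (norm_nonneg _).trans (hM 0)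
  unfold dF
  refine Real.iSup_le ?_ (by positivity)
  rintro ⟨f, hf1, hf2⟩
  have hc : Continuous f := hf2.continuous
  have ht : Continuous (fun θ => θ + t • g θ) := by fun_prop
  simp only
  rw [integral_map ht.aemeasurable hc.aestronglyMeasurable, ← integral_sub]
  · rw [← Real.norm_eq_abs]
    refine (norm_integral_le_of_norm_le_const (C := C * (|t| * M))
      (Filter.Eventually.of_forall fun θ => ?_)).trans (by simp)
    have h1 := hf2.dist_le_mul (θ + t • g θ) θ
    rw [dist_eq_norm, dist_eq_norm, add_sub_cancel_left, norm_smul, Real.coe_toNNReal _ hC.le,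
      Real.norm_eq_abs t] at h1
    refine h1.trans ?_
    have := hM θ
    gcongr
  · exact Integrable.of_bound (hc.comp ht).aestronglyMeasurable C
      (Filter.Eventually.of_forall fun θ => hf1 _)
  · exact Integrable.of_bound hc.aestronglyMeasurable C
      (Filter.Eventually.of_forall fun θ => hf1 _)

/-- Necessary local optimality condition.  Under the continuity and the
smoothness/boundedness assumptions, if `μ*` lies in the `d_F`-closure of `P₂` and is a
local minimum of `L_S` on `P` with respect to `d_F`, then
`‖E_S[s_{μ*}(θ,x,y)]‖_{L²(μ*)} = 0`. -/
theorem necessary_local_optimality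
    {d : ℕ} {X : Type*} (C : ℝ) (hC : 0 < C)
    (l : ℝ → ℝ) (hl : ContDiff ℝ 2 l)
    (h : EuclideanSpace ℝ (Fin d) → X → ℝ)
    (hbdd : ∀ θ x, h θ x ∈ Set.Icc (-1 : ℝ) 1)
    (hC2 : ∀ x : X, ContDiff ℝ 2 (fun θ => h θ x))
    (B : ℝ)
    (hB : ∀ (θ : EuclideanSpace ℝ (Fin d)) (x : X),
      ‖gradient (fun θ' => h θ' x) θ‖ ≤ B ∧ ‖hess h x θ‖ ≤ B)
    (N : ℕ) (hN : 0 < N) (S : Fin N → X × ℝ)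
    (hy : ∀ j, (S j).2 = 1 ∨ (S j).2 = -1)
    -- Assumption (Continuity)
    (hFCh : ∀ x : X, (fun θ => h θ x) ∈ FC (d := d) C)
    (hFCs : ∀ μ : Measure (EuclideanSpace ℝ (Fin d)), IsProbabilityMeasure μ →
      (fun θ => ‖gradS l h N S μ θ‖ ^ 2) ∈ FC (d := d) C)
    (μstar : Measure (EuclideanSpace ℝ (Fin d))) [IsProbabilityMeasure μstar]
    -- `μ*` lies in the `d_F`-closure of `P₂`
    (hclosure : ∀ ε : ℝ, 0 < ε →
      ∃ μ : Measure (EuclideanSpace ℝ (Fin d)), IsProbabilityMeasure μ ∧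
        Integrable (fun θ => ‖θ‖ ^ 2) μ ∧ dF C μ μstar < ε)
    -- `μ*` is a local minimum of `L_S` with respect to `d_F`
    (hlocmin : ∃ δ : ℝ, 0 < δ ∧
      ∀ μ : Measure (EuclideanSpace ℝ (Fin d)), IsProbabilityMeasure μ →
        dF C μ μstar < δ → LS l h N S μstar ≤ LS l h N S μ) :
    Real.sqrt (∫ θ, ‖gradS l h N S μstar θ‖ ^ 2 ∂μstar) = 0 := by
  obtain ⟨δ, hδ, hmin⟩ := hlocmin
  set g := gradS l h N S μstar with hgdef
  have hgc : Continuous g := by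
    rw [hgdef]
    unfold gradS smu
    apply Continuous.fun_const_smul
    apply continuous_finsetSum
    intro j _
    exact (aux_grad_cont h hC2 _).fun_const_smul _
  have hM : ∀ θ, ‖g θ‖ ≤ Real.sqrt C := fun θ =>
    Real.le_sqrt_of_sq_le ((le_abs_self _).trans ((hFCs μstar inferInstance).1 θ))
  have hens := fun x => aux_ens C h hC2 x (hFCh x) μstar g hgc _ hM
  have hmap0 : μstar.map (fun θ => θ + (0:ℝ) • g θ) = μstar := by simp
  let φ : ℝ → ℝ := fun t => LS l h N S (μstar.map (fun θ => θ + t • g θ))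
  have hder : HasDerivAt φ ((N : ℝ)⁻¹ * ∑ j : Fin N,
      deriv l (-((S j).2 * ensemble h μstar (S j).1)) * (-((S j).2 *
        ∫ θ, inner ℝ (gradient (fun θ' => h θ' (S j).1) θ) (g θ) ∂μstar))) 0 := by
    refine HasDerivAt.const_mul _ (HasDerivAt.fun_sum fun j _ => ?_)
    have h1 := (((hens (S j).1).2).const_mul (S j).2).fun_neg
    have h2 : HasDerivAt l (deriv l (-((S j).2 * ensemble h μstar (S j).1)))
        (-((S j).2 * ensemble h (μstar.map (fun θ => θ + (0:ℝ) • g θ)) (S j).1)) := by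
      rw [hmap0]
      exact ((hl.differentiable (by norm_num)) _).hasDerivAt
    exact h2.comp (0:ℝ) h1
  have hloc : IsLocalMin φ 0 := by
    have hev : ∀ᶠ t : ℝ in nhds 0, C * (|t| * Real.sqrt C) < δ := by
      have hcont : Continuous (fun t : ℝ => C * (|t| * Real.sqrt C)) := by fun_prop
      exact hcont.continuousAt.eventually_lt continuousAt_const (by simpa using hδ)
    filter_upwards [hev] with t ht
    have hp : IsProbabilityMeasure (μstar.map (fun θ => θ + t • g θ)) :=
      Measure.isProbabilityMeasure_map
        (by fun_prop : Continuous (fun θ => θ + t • g θ)).aemeasurable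
    have := hmin _ hp ((aux_dF C hC μstar g hgc _ hM t).trans_lt ht)
    simpa only [φ, hmap0] using this
  have hz := hloc.hasDerivAt_eq_zero hder
  have hint : ∫ θ, ‖g θ‖ ^ 2 ∂μstar = (N : ℝ)⁻¹ * ∑ j : Fin N,
      deriv l (-((S j).2 * ensemble h μstar (S j).1)) * (-((S j).2 *
        ∫ θ, inner ℝ (gradient (fun θ' => h θ' (S j).1) θ) (g θ) ∂μstar)) := by
    have hpt : ∀ θ, ‖g θ‖ ^ 2 = (N : ℝ)⁻¹ * ∑ j : Fin N,
        (-(deriv l (-((S j).2 * ensemble h μstar (S j).1))) * (S j).2) *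
          inner ℝ (gradient (fun θ' => h θ' (S j).1) θ) (g θ) := by
      intro θ
      rw [← real_inner_self_eq_norm_sq]
      conv_lhs => rw [show g θ = (N : ℝ)⁻¹ • ∑ j : Fin N, smu l h μstar θ (S j).1 (S j).2 from rfl]
      conv_lhs => arg 3; change g θ
      rw [real_inner_smul_left, sum_inner]
      simp only [smu, real_inner_smul_left]
    simp_rw [hpt]
    rw [integral_const_mul, integral_finsetSum _ fun j _ => ((hens (S j).1).1).const_mul _]
    simp_rw [integral_const_mul]
    congr 1
    refine Finset.sum_congr rfl fun j _ => ?_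
    ring
  rw [hint, hz, Real.sqrt_zero]
end

section
/- Suppose Assumption (Smoothness and boundedness) holds and the loss l is convex. Let μ* ∈ P₂ satisfy ‖E_S[s_{μ*}(θ,x,y)]‖_{L²(μ*)} = 0, and assume there exist α > 0 and γ > 0 such that H_{μ*}(ξ) ≥ (α/2) ‖ξ‖²_{L²(μ*)} whenever ‖ξ‖²_{L^∞(μ*)} ≤ γ. Then ξ = 0 is a local minimum of the function ξ ↦ L_S((id+ξ)_♯ μ*) on L^∞(μ*). -/
open MeasureTheory
open scoped RealInnerProductSpace

/-- The quadratic form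
`H_μ(ξ) = −E_S[y l'(−y h_μ(x)) E_μ[‖ξ(θ)‖²_{∇²_θ h(θ',x)}]]
          + E_S[l''(−y h_μ(x)) (E_μ[∇_θ h(θ,x)ᵀ ξ(θ)])²]`,
where `θ' = θ'(θ,x)` is a given choice of intermediate points. -/
noncomputable def Hmu {d : ℕ} {X : Type*} (l : ℝ → ℝ)
    (h : EuclideanSpace ℝ (Fin d) → X → ℝ) (N : ℕ) (S : Fin N → X × ℝ)
    (μ : Measure (EuclideanSpace ℝ (Fin d)))
    (ξ : EuclideanSpace ℝ (Fin d) → EuclideanSpace ℝ (Fin d))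
    (θ' : EuclideanSpace ℝ (Fin d) → X → EuclideanSpace ℝ (Fin d)) : ℝ :=
  -((N : ℝ)⁻¹ * ∑ j : Fin N, (S j).2 * deriv l (-((S j).2 * ensemble h μ (S j).1)) *
      ∫ θ, ⟪ξ θ, hess h (S j).1 (θ' θ (S j).1) (ξ θ)⟫ ∂μ)
    + (N : ℝ)⁻¹ * ∑ j : Fin N, deriv (deriv l) (-((S j).2 * ensemble h μ (S j).1)) *
      (∫ θ, ⟪gradient (fun θ'' => h θ'' (S j).1) θ, ξ θ⟫ ∂μ) ^ 2

/-- One-dimensional second order Taylor formula. -/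
lemma taylor_one (g g' g'' : ℝ → ℝ) (h1 : ∀ t, HasDerivAt g (g' t) t)
    (h2 : ∀ t, HasDerivAt g' (g'' t) t) :
    ∃ t ∈ Set.Icc (0 : ℝ) 1, g 1 - g 0 - g' 0 = g'' t / 2 := by
  have hd : ∀ t, HasDerivAt (fun t => g t - t * g' 0) (g' t - 1 * g' 0) t := fun t =>
    (h1 t).sub ((hasDerivAt_id t).mul_const _)
  have hq : ∀ t : ℝ, HasDerivAt (fun t : ℝ => t ^ 2) (2 * t) t := fun t => by
    simpa using hasDerivAt_pow 2 t
  obtain ⟨c, hc, hce⟩ := exists_ratio_hasDerivAt_eq_ratio_slope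
    (fun t => g t - t * g' 0) (fun t => g' t - 1 * g' 0) (zero_lt_one (α := ℝ))
    (fun t _ => (hd t).continuousAt.continuousWithinAt) (fun t _ => hd t)
    (fun t : ℝ => t ^ 2) (fun t => 2 * t)
    (fun t _ => (hq t).continuousAt.continuousWithinAt) (fun t _ => hq t)
  obtain ⟨t, ht, hte⟩ := exists_hasDerivAt_eq_slope g' g'' hc.1
    (fun t _ => (h2 t).continuousAt.continuousWithinAt) (fun t _ => h2 t)
  refine ⟨t, ⟨ht.1.le, (ht.2.trans hc.2).le⟩, ?_⟩
  have hc0 : c ≠ 0 := hc.1.ne'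
  rw [hte]
  field_simp
  simp only [sub_zero]
  linarith

lemma taylor_h {d : ℕ} {X : Type*} (h : EuclideanSpace ℝ (Fin d) → X → ℝ) (x : X)
    (hC2 : ContDiff ℝ 2 (fun θ => h θ x)) (θ v : EuclideanSpace ℝ (Fin d)) :
    ∃ t ∈ Set.Icc (0 : ℝ) 1, ⟪v, hess h x (θ + t • v) v⟫ =
      2 * (h (θ + v) x - h θ x - ⟪gradient (fun θ' => h θ' x) θ, v⟫) := by
  have hg : ∀ θ, HasGradientAt (fun θ' => h θ' x) (gradient (fun θ' => h θ' x) θ) θ := fun θ =>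
    (hC2.differentiable (by norm_num) θ).hasGradientAt
  have hgd : Differentiable ℝ (gradient (fun θ' => h θ' x)) := by
    have : ContDiff ℝ 1 (fderiv ℝ (fun θ' => h θ' x)) := hC2.fderiv_right (by norm_num)
    exact (InnerProductSpace.toDual ℝ (EuclideanSpace ℝ (Fin d))).symm.differentiable.comp
      (this.differentiable (by norm_num))
  have hline : ∀ t : ℝ, HasDerivAt (fun t : ℝ => θ + t • v) v t := fun t => by
    simpa using ((hasDerivAt_id t).smul_const v).const_add θ
  obtain ⟨t, ht, he⟩ := taylor_one (fun t => h (θ + t • v) x)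
    (fun t => ⟪gradient (fun θ' => h θ' x) (θ + t • v), v⟫)
    (fun t => ⟪hess h x (θ + t • v) v, v⟫)
    (fun t => by
      have := (hg (θ + t • v)).hasFDerivAt.comp_hasDerivAt t (hline t)
      rw [InnerProductSpace.toDual_apply_apply] at this
      exact this)
    (fun t => by
      have h1 := (hgd (θ + t • v)).hasFDerivAt.comp_hasDerivAt t (hline t)
      have := h1.inner ℝ (hasDerivAt_const t v)
      simpa [hess] using this)
  refine ⟨t, ht, ?_⟩
  rw [real_inner_comm]
  simp only [one_smul, zero_smul, add_zero] at he
  linarith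

lemma scalar_lower (l : ℝ → ℝ) (hl : ContDiff ℝ 2 l) (a η : ℝ) (hη : 0 < η) :
    ∃ ρ > 0, ∀ δ : ℝ, |δ| < ρ →
      deriv l a * δ + deriv (deriv l) a / 2 * δ ^ 2 - η * δ ^ 2 ≤ l (a + δ) - l a := by
  have hl1 : ContDiff ℝ 1 (deriv l) := by
    have h2 : ContDiff ℝ (1 + 1) l := by rw [one_add_one_eq_two]; exact hl
    exact (contDiff_succ_iff_deriv.1 h2).2.2
  have hl2 : Continuous (deriv (deriv l)) := hl1.continuous_deriv (by norm_num)
  obtain ⟨ρ, hρ, hc⟩ := Metric.continuousAt_iff.1 hl2.continuousAt (2 * η) (by positivity)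
  refine ⟨ρ, hρ, fun δ hδ => ?_⟩
  have hline : ∀ t : ℝ, HasDerivAt (fun t : ℝ => a + t * δ) δ t := fun t => by
    simpa using ((hasDerivAt_id t).mul_const δ).const_add a
  obtain ⟨t, ht, he⟩ := taylor_one (fun t => l (a + t * δ))
    (fun t => deriv l (a + t * δ) * δ) (fun t => deriv (deriv l) (a + t * δ) * δ * δ)
    (fun t => ((hl.differentiable (by norm_num) _).hasDerivAt.comp t (hline t)))
    (fun t => (((hl1.differentiable (by norm_num) _).hasDerivAt.comp t (hline t)).mul_const δ))
  simp only [one_mul, zero_mul, add_zero] at he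
  have hd : dist (a + t * δ) a < ρ := by
    rw [Real.dist_eq, add_sub_cancel_left, abs_mul, abs_of_nonneg ht.1]
    nlinarith [ht.2, abs_nonneg δ]
  have := hc hd
  rw [Real.dist_eq, abs_lt] at this
  nlinarith [sq_nonneg δ]

lemma scalar_main (l : ℝ → ℝ) (hl : ContDiff ℝ 2 l) (a B α : ℝ) (hB : 0 ≤ B) (hα : 0 < α) :
    ∀ᶠ ε in nhdsWithin (0 : ℝ) (Set.Ioi 0), ∀ V G Q s : ℝ, 0 ≤ V → V ≤ ε ^ 2 →
      |G| ≤ B * ε → G ^ 2 ≤ B ^ 2 * V → |Q| ≤ B * V → (s = 1 ∨ s = -1) →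
      -s * deriv l a * (G + Q / 2) + deriv (deriv l) a / 2 * G ^ 2 - α / 4 * V
        ≤ l (a + -(s * (G + Q / 2))) - l a := by
  set η := α / (20 * (B ^ 2 + 1)) with hη
  have hη0 : 0 < η := by positivity
  obtain ⟨ρ, hρ, hlow⟩ := scalar_lower l hl a η hη0
  set C := |deriv (deriv l) a| with hC
  have hC0 : 0 ≤ C := abs_nonneg _
  have e1 : ∀ᶠ ε in nhdsWithin (0 : ℝ) (Set.Ioi 0), ε ∈ Set.Ioo 0
      (min 1 (min (α / (5 * (C * B ^ 2 + 1))) (ρ / (2 * (B + 1))))) :=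
    Ioo_mem_nhdsGT (by positivity)
  filter_upwards [e1] with ε hε V G Q s hV hVε hG hG2 hQ hs
  obtain ⟨hε0, hε'⟩ := hε
  simp only [lt_min_iff] at hε'
  obtain ⟨hε1, hε2, hε3⟩ := hε'
  rw [lt_div_iff₀ (by positivity)] at hε2 hε3
  have hηB : η * (20 * (B ^ 2 + 1)) = α := by rw [hη]; field_simp
  have hs2 : s ^ 2 = 1 := by rcases hs with rfl | rfl <;> norm_num
  have hsa : |s| = 1 := by rcases hs with rfl | rfl <;> norm_num
  have hVε1 : V ≤ ε := by nlinarith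
  have hQε : |Q| ≤ B * ε := hQ.trans (mul_le_mul_of_nonneg_left hVε1 hB)
  have hab : |G + Q / 2| ≤ B * ε + B * ε / 2 := by
    refine (abs_add_le _ _).trans (add_le_add hG ?_)
    rw [abs_div, abs_two]; linarith
  have key := hlow (-(s * (G + Q / 2))) (by
    rw [abs_neg, abs_mul, hsa, one_mul]; nlinarith)
  have hsq : (-(s * (G + Q / 2))) ^ 2 = (G + Q / 2) ^ 2 := by
    rw [neg_sq, mul_pow, hs2, one_mul]
  rw [hsq] at key
  have hGQ : |G * Q| ≤ B ^ 2 * (ε * V) := by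
    rw [abs_mul]
    calc |G| * |Q| ≤ (B * ε) * (B * V) := mul_le_mul hG hQ (abs_nonneg _) (by positivity)
      _ = _ := by ring
  have hQQ : Q ^ 2 ≤ B ^ 2 * (ε * V) := by
    rw [← sq_abs, sq]
    calc |Q| * |Q| ≤ (B * ε) * (B * V) := mul_le_mul hQε hQ (abs_nonneg _) (by positivity)
      _ = _ := by ring
  have hR : |G * Q + Q ^ 2 / 4| ≤ 5 / 4 * (B ^ 2 * (ε * V)) := by
    refine (abs_add_le _ _).trans ?_
    rw [abs_of_nonneg (by positivity : 0 ≤ Q ^ 2 / 4)]; linarith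
  have hCR : |deriv (deriv l) a * (G * Q + Q ^ 2 / 4)| ≤ C * (5 / 4 * (B ^ 2 * (ε * V))) := by
    rw [abs_mul]; exact mul_le_mul_of_nonneg_left hR hC0
  have hCR' := (abs_le.1 hCR).1
  have h1 : C * (5 / 4 * (B ^ 2 * (ε * V))) ≤ α / 4 * V := by
    have h0 : ε * (C * B ^ 2) ≤ α / 5 := by linarith
    have h0' := mul_le_mul_of_nonneg_right h0 hV
    linarith
  have hεV : ε * V ≤ V := by nlinarith
  have hd2 : (G + Q / 2) ^ 2 ≤ 5 / 2 * (B ^ 2 * V) := by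
    have : B ^ 2 * (ε * V) ≤ B ^ 2 * V := mul_le_mul_of_nonneg_left hεV (by positivity)
    linarith [sq_nonneg (G - Q / 2)]
  have h2 : η * (G + Q / 2) ^ 2 ≤ α / 8 * V := by
    have h3 := mul_le_mul_of_nonneg_left hd2 hη0.le
    have h4 : η * B ^ 2 ≤ α / 20 := by linarith
    have h5 := mul_le_mul_of_nonneg_right h4 hV
    linarith
  have expand : deriv (deriv l) a / 2 * (G + Q / 2) ^ 2
      = deriv (deriv l) a / 2 * G ^ 2 + (deriv (deriv l) a * (G * Q + Q ^ 2 / 4)) / 2 := by ring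
  rw [expand] at key
  linarith

/-- Sufficient local optimality condition.  Under the smoothness and
boundedness assumption, with `l` convex, if `μ*` satisfies the first-order condition
`‖E_S[s_{μ*}]‖_{L²(μ*)} = 0` and the second-order condition
`H_{μ*}(ξ) ≥ (α/2)‖ξ‖²_{L²(μ*)}` for all `ξ` with `‖ξ‖²_{L^∞(μ*)} ≤ γ`, then `ξ = 0` is
a local minimum of `ξ ↦ L_S((id+ξ)_♯ μ*)` on `L^∞(μ*)`. -/
theorem sufficient_local_optimality
    {d : ℕ} {X : Type*}
    (l : ℝ → ℝ) (hl : ContDiff ℝ 2 l) (hlconv : ConvexOn ℝ Set.univ l)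
    (h : EuclideanSpace ℝ (Fin d) → X → ℝ)
    (hbdd : ∀ θ x, h θ x ∈ Set.Icc (-1 : ℝ) 1)
    (hC2 : ∀ x : X, ContDiff ℝ 2 (fun θ => h θ x))
    (B : ℝ)
    (hB : ∀ (θ : EuclideanSpace ℝ (Fin d)) (x : X),
      ‖gradient (fun θ' => h θ' x) θ‖ ≤ B ∧ ‖hess h x θ‖ ≤ B)
    (N : ℕ) (hN : 0 < N) (S : Fin N → X × ℝ)
    (hy : ∀ j, (S j).2 = 1 ∨ (S j).2 = -1)
    (μstar : Measure (EuclideanSpace ℝ (Fin d))) [IsProbabilityMeasure μstar]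
    (hmom : Integrable (fun θ => ‖θ‖ ^ 2) μstar)
    -- first-order condition (local optimality condition)
    (hfirst : Real.sqrt (∫ θ, ‖gradS l h N S μstar θ‖ ^ 2 ∂μstar) = 0)
    (α γ : ℝ) (hα : 0 < α) (hγ : 0 < γ)
    -- second-order condition: `H_{μ*}(ξ) ≥ (α/2)‖ξ‖²_{L²(μ*)}` whenever `‖ξ‖²_{L^∞} ≤ γ`
    (hsecond : ∀ ξ : EuclideanSpace ℝ (Fin d) → EuclideanSpace ℝ (Fin d),
      Measurable ξ → (∀ᵐ θ ∂μstar, ‖ξ θ‖ ^ 2 ≤ γ) →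
      ∀ θ' : EuclideanSpace ℝ (Fin d) → X → EuclideanSpace ℝ (Fin d),
        (∀ θ x, ∃ t ∈ Set.Icc (0 : ℝ) 1, θ' θ x = θ + t • ξ θ) →
        (α / 2) * (∫ θ, ‖ξ θ‖ ^ 2 ∂μstar) ≤ Hmu l h N S μstar ξ θ') :
    ∃ ε : ℝ, 0 < ε ∧
      ∀ ξ : EuclideanSpace ℝ (Fin d) → EuclideanSpace ℝ (Fin d),
        Measurable ξ → (∀ᵐ θ ∂μstar, ‖ξ θ‖ ≤ ε) →
        LS l h N S μstar ≤ LS l h N S (μstar.map (fun θ => θ + ξ θ)) := by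
  have hBx : ∀ _ : Fin N, 0 ≤ B := fun j => (norm_nonneg _).trans (hB 0 (S j).1).1
  have hB0 : 0 ≤ B := hBx ⟨0, hN⟩
  set D : Fin N → EuclideanSpace ℝ (Fin d) → EuclideanSpace ℝ (Fin d) :=
    fun j θ => gradient (fun θ'' => h θ'' (S j).1) θ with hD
  have hDc : ∀ j, Continuous (D j) := fun j => by
    have : Continuous (fderiv ℝ (fun θ' => h θ' (S j).1)) :=
      (hC2 (S j).1).continuous_fderiv (by norm_num)
    exact (InnerProductSpace.toDual ℝ (EuclideanSpace ℝ (Fin d))).symm.continuous.comp this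
  have hDB : ∀ j θ, ‖D j θ‖ ≤ B := fun j θ => (hB θ (S j).1).1
  have hhc : ∀ j, Continuous (fun θ => h θ (S j).1) := fun j => (hC2 (S j).1).continuous
  set a : Fin N → ℝ := fun j => -((S j).2 * ensemble h μstar (S j).1) with ha
  have hgS : ∀ θ, gradS l h N S μstar θ
      = (N : ℝ)⁻¹ • ∑ j : Fin N, (-(deriv l (a j)) * (S j).2) • D j θ := fun θ => rfl
  have hgSc : Continuous (gradS l h N S μstar) := by
    have : gradS l h N S μstar = fun θ =>
      (N : ℝ)⁻¹ • ∑ j : Fin N, (-(deriv l (a j)) * (S j).2) • D j θ := funext hgS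
    rw [this]
    exact (continuous_finsetSum _ fun j _ =>
      (hDc j).const_smul (-(deriv l (a j)) * (S j).2)).const_smul ((N : ℝ)⁻¹)
  -- the first order condition
  have hzero : ∀ᵐ θ ∂μstar, gradS l h N S μstar θ = 0 := by
    have hnn : 0 ≤ ∫ θ, ‖gradS l h N S μstar θ‖ ^ 2 ∂μstar := integral_nonneg fun _ => by positivity
    have hi : ∫ θ, ‖gradS l h N S μstar θ‖ ^ 2 ∂μstar = 0 := (Real.sqrt_eq_zero hnn).1 hfirst
    have hint : Integrable (fun θ => ‖gradS l h N S μstar θ‖ ^ 2) μstar := by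
      refine Integrable.of_bound (hgSc.norm.pow 2).aestronglyMeasurable
        ((‖(N : ℝ)⁻¹‖ * ∑ j : Fin N, ‖-(deriv l (a j)) * (S j).2‖ * B) ^ 2)
        (Filter.Eventually.of_forall fun θ => ?_)
      rw [norm_pow, norm_norm]
      refine pow_le_pow_left₀ (norm_nonneg _) ?_ 2
      rw [hgS, norm_smul]
      refine mul_le_mul_of_nonneg_left ?_ (norm_nonneg _)
      refine norm_sum_le_of_le _ fun j _ => ?_
      rw [norm_smul]
      exact mul_le_mul_of_nonneg_left (hDB j θ) (norm_nonneg _)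
    have := (integral_eq_zero_iff_of_nonneg (fun _ => by positivity) hint).1 hi
    filter_upwards [this] with θ hθ
    simpa using hθ
  have hev1 : ∀ᶠ ε in nhdsWithin (0 : ℝ) (Set.Ioi 0), ∀ j, ∀ V G Q s : ℝ, 0 ≤ V → V ≤ ε ^ 2 →
      |G| ≤ B * ε → G ^ 2 ≤ B ^ 2 * V → |Q| ≤ B * V → (s = 1 ∨ s = -1) →
      -s * deriv l (a j) * (G + Q / 2) + deriv (deriv l) (a j) / 2 * G ^ 2 - α / 4 * V
        ≤ l (a j + -(s * (G + Q / 2))) - l (a j) :=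
    Filter.eventually_all.2 fun j => scalar_main l hl (a j) B α hB0 hα
  have hev2 : ∀ᶠ ε in nhdsWithin (0 : ℝ) (Set.Ioi 0), ε ∈ Set.Ioo 0 (Real.sqrt γ) :=
    Ioo_mem_nhdsGT (Real.sqrt_pos.2 hγ)
  obtain ⟨ε, hε, hε0, hεγ⟩ := (hev1.and hev2).exists
  refine ⟨ε, hε0, fun ξ hξ hξε => ?_⟩
  have hεγ' : ε ^ 2 ≤ γ := by
    have := (Real.lt_sqrt hε0.le).1 hεγ
    exact this.le
  have hxi2 : ∀ᵐ θ ∂μstar, ‖ξ θ‖ ^ 2 ≤ ε ^ 2 := by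
    filter_upwards [hξε] with θ hθ
    exact pow_le_pow_left₀ (norm_nonneg _) hθ 2
  choose T hT hTe using fun θ x => taylor_h h x (hC2 x) θ (ξ θ)
  have hsec := hsecond ξ hξ (hxi2.mono fun θ hθ => hθ.trans hεγ')
    (fun θ x => θ + T θ x • ξ θ) (fun θ x => ⟨T θ x, hT θ x, rfl⟩)
  set V := ∫ θ, ‖ξ θ‖ ^ 2 ∂μstar with hV
  have hVint : Integrable (fun θ => ‖ξ θ‖ ^ 2) μstar := by
    refine Integrable.of_bound (hξ.norm.pow_const 2).aestronglyMeasurable (ε ^ 2) ?_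
    filter_upwards [hxi2] with θ hθ
    rwa [Real.norm_of_nonneg (by positivity)]
  have hV0 : 0 ≤ V := integral_nonneg fun _ => by positivity
  have hVε : V ≤ ε ^ 2 := by
    have := integral_mono_ae hVint (integrable_const (ε ^ 2)) hxi2
    simpa using this
  set G : Fin N → ℝ := fun j => ∫ θ, ⟪D j θ, ξ θ⟫ ∂μstar with hG
  set Q : Fin N → ℝ := fun j =>
    ∫ θ, ⟪ξ θ, hess h (S j).1 (θ + T θ (S j).1 • ξ θ) (ξ θ)⟫ ∂μstar with hQ
  have hfb : ∀ j, ∀ᵐ θ ∂μstar, ‖⟪D j θ, ξ θ⟫‖ ≤ B * ε := fun j => by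
    filter_upwards [hξε] with θ hθ
    exact (norm_inner_le_norm _ _).trans (mul_le_mul (hDB j θ) hθ (norm_nonneg _) hB0)
  have hfint : ∀ j, Integrable (fun θ => ⟪D j θ, ξ θ⟫) μstar := fun j =>
    Integrable.of_bound ((hDc j).measurable.inner hξ).aestronglyMeasurable (B * ε) (hfb j)
  have hGb : ∀ j, |G j| ≤ B * ε := fun j => by
    have := norm_integral_le_of_norm_le_const (hfb j)
    simpa using this
  have hG2 : ∀ j, G j ^ 2 ≤ B ^ 2 * V := fun j => by
    have h1 : ∫ θ, (2 * G j * ⟪D j θ, ξ θ⟫ - G j ^ 2) ∂μstar ≤ ∫ θ, B ^ 2 * ‖ξ θ‖ ^ 2 ∂μstar := by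
      refine integral_mono (((hfint j).const_mul _).sub (integrable_const _))
        (hVint.const_mul _) fun θ => ?_
      have h2 : ‖⟪D j θ, ξ θ⟫‖ ≤ B * ‖ξ θ‖ :=
        (norm_inner_le_norm _ _).trans (mul_le_mul_of_nonneg_right (hDB j θ) (norm_nonneg _))
      have h3 := pow_le_pow_left₀ (norm_nonneg _) h2 2
      rw [Real.norm_eq_abs, sq_abs, mul_pow] at h3
      show 2 * G j * ⟪D j θ, ξ θ⟫ - G j ^ 2 ≤ B ^ 2 * ‖ξ θ‖ ^ 2
      nlinarith [sq_nonneg (⟪D j θ, ξ θ⟫ - G j)]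
    rw [integral_sub ((hfint j).const_mul _) (integrable_const _), integral_const_mul,
      integral_const_mul] at h1
    simp only [integral_const, probReal_univ, one_smul] at h1
    have h4 : ∫ θ, ⟪D j θ, ξ θ⟫ ∂μstar = G j := rfl
    rw [h4] at h1
    nlinarith
  have hQb : ∀ j, |Q j| ≤ B * V := fun j => by
    rw [hV, ← integral_const_mul]
    rw [← Real.norm_eq_abs, hQ]
    refine norm_integral_le_of_norm_le (hVint.const_mul B) (Filter.Eventually.of_forall fun θ => ?_)
    refine (norm_inner_le_norm _ _).trans ?_
    have h1 := (hess h (S j).1 (θ + T θ (S j).1 • ξ θ)).le_of_opNorm_le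
      (hB (θ + T θ (S j).1 • ξ θ) (S j).1).2 (ξ θ)
    nlinarith [norm_nonneg (ξ θ)]
  have hbd : ∀ θ x, ‖h θ x‖ ≤ 1 := fun θ x => abs_le.2 (hbdd θ x)
  have hhint : ∀ j, Integrable (fun θ => h θ (S j).1) μstar := fun j =>
    Integrable.of_bound (hhc j).aestronglyMeasurable 1 (Filter.Eventually.of_forall fun θ => hbd _ _)
  have hmap : Measurable (fun θ => θ + ξ θ) := measurable_id.add hξ
  have hhint' : ∀ j, Integrable (fun θ => h (θ + ξ θ) (S j).1) μstar := fun j =>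
    Integrable.of_bound ((hhc j).measurable.comp hmap).aestronglyMeasurable 1
      (Filter.Eventually.of_forall fun θ => hbd _ _)
  have hens : ∀ j, ensemble h (μstar.map (fun θ => θ + ξ θ)) (S j).1
      = ensemble h μstar (S j).1 + (G j + Q j / 2) := fun j => by
    have h1 : ensemble h (μstar.map (fun θ => θ + ξ θ)) (S j).1
        = ∫ θ, h (θ + ξ θ) (S j).1 ∂μstar :=
      integral_map hmap.aemeasurable (hhc j).aestronglyMeasurable
    have h2 : Q j = 2 * ((∫ θ, h (θ + ξ θ) (S j).1 ∂μstar) - (∫ θ, h θ (S j).1 ∂μstar) - G j) := by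
      rw [hQ, hG]
      simp only [hTe]
      rw [integral_const_mul, ← integral_sub (hhint' j) (hhint j)]
      exact congrArg (fun z : ℝ => 2 * z) (integral_sub ((hhint' j).sub (hhint j)) (hfint j))
    rw [h1, h2]
    unfold ensemble
    ring
  have hfo : ∑ j : Fin N, (-(deriv l (a j)) * (S j).2) * G j = 0 := by
    have h1 : ∫ θ, ⟪gradS l h N S μstar θ, ξ θ⟫ ∂μstar = 0 := by
      rw [integral_eq_zero_of_ae]
      filter_upwards [hzero] with θ hθ
      simp [hθ]
    simp only [hgS, real_inner_smul_left, sum_inner] at h1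
    rw [integral_const_mul, integral_finsetSum _ fun j _ => (hfint j).const_mul _] at h1
    simp only [integral_const_mul] at h1
    have hN' : (N : ℝ)⁻¹ ≠ 0 := by positivity
    exact (mul_eq_zero.1 h1).resolve_left hN'
  have hH : Hmu l h N S μstar ξ (fun θ x => θ + T θ x • ξ θ)
      = -((N : ℝ)⁻¹ * ∑ j : Fin N, (S j).2 * deriv l (a j) * Q j)
        + (N : ℝ)⁻¹ * ∑ j : Fin N, deriv (deriv l) (a j) * G j ^ 2 := rfl
  rw [hH] at hsec
  have hterm : ∀ j, -(S j).2 * deriv l (a j) * (G j + Q j / 2)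
      + deriv (deriv l) (a j) / 2 * G j ^ 2 - α / 4 * V
        ≤ l (-((S j).2 * ensemble h (μstar.map (fun θ => θ + ξ θ)) (S j).1)) - l (a j) := fun j => by
    have := hε j V (G j) (Q j) (S j).2 hV0 hVε (hGb j) (hG2 j) (hQb j) (hy j)
    have he : -((S j).2 * ensemble h (μstar.map (fun θ => θ + ξ θ)) (S j).1)
        = a j + -((S j).2 * (G j + Q j / 2)) := by
      rw [hens, ha]; ring
    rwa [he]
  have hsum := Finset.sum_le_sum (s := Finset.univ) fun j _ => hterm j
  have hlhs : ∑ j : Fin N, (-(S j).2 * deriv l (a j) * (G j + Q j / 2)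
      + deriv (deriv l) (a j) / 2 * G j ^ 2 - α / 4 * V)
      = (∑ j : Fin N, (-(deriv l (a j)) * (S j).2) * G j)
        - (∑ j : Fin N, (S j).2 * deriv l (a j) * Q j) / 2
        + (∑ j : Fin N, deriv (deriv l) (a j) * G j ^ 2) / 2 - N * (α / 4 * V) := by
    have hc : (N : ℝ) * (α / 4 * V) = ∑ _j : Fin N, α / 4 * V := by simp
    rw [hc, Finset.sum_div, Finset.sum_div, ← Finset.sum_sub_distrib, ← Finset.sum_add_distrib,
      ← Finset.sum_sub_distrib]
    exact Finset.sum_congr rfl fun j _ => by ring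
  rw [hlhs, hfo, Finset.sum_sub_distrib] at hsum
  have hNpos : (0 : ℝ) < N := by exact_mod_cast hN
  have hsec' := mul_le_mul_of_nonneg_left hsec hNpos.le
  rw [mul_add, mul_neg, mul_inv_cancel_left₀ hNpos.ne', mul_inv_cancel_left₀ hNpos.ne'] at hsec'
  unfold LS
  refine mul_le_mul_of_nonneg_left ?_ (by positivity)
  change ∑ j : Fin N, l (a j) ≤ _
  nlinarith
end
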